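/- arXiv:1805.09211 — 2 statements merged into one kernel-verified Lean document; each statement's English description precedes it below -/
import Mathlib

section
/- Let d ≥ 6 be even, write D = (d+2)/2, and suppose D ≤ ⌊√D⌋·⌈√D⌉. Let k₃ be the largest nonnegative integer k such that D ≤ (⌊√D⌋ − k)(⌈√D⌉ + k). Then there exists a set S ⊆ ℤ/dℤ × ℤ/dℤ of cardinality |S| = ⌊√D⌋ + ⌈√D⌉ + ⌈⌈(d+1)/4⌉ / (⌈√D⌉ + k₃)⌉ such that there is no unit vector α ∈ ℂ^d for which the vectors X^m Z^n α, (m,n) ∈ S, are pairwise orthogonal; that is, there exists a 1-LOCC indistinguishable set of that many generalized Bell states in d⊗d. -/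
open Complex

/-- `ω d = exp(2πi/d)`, the primitive `d`-th root of unity in `ℂ`. -/
noncomputable def ω (d : ℕ) : ℂ := Complex.exp (2 * Real.pi * Complex.I / d)

/-- The generalized Pauli operator `U_{m,n} = X^m Z^n` acting on `ℂ^d`
(coordinates indexed by `ZMod d`), where `X e_j = e_{j+1}` and `Z e_j = ω^j e_j`:
`(U_{m,n} α)_k = ω^{n (k-m)} α_{k-m}`. -/
noncomputable def pU (d : ℕ) [NeZero d] (m n : ZMod d) (α : ZMod d → ℂ) : ZMod d → ℂ :=
  fun k => ω d ^ (n.val * (k - m).val) * α (k - m)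

/-- The standard Hermitian inner product on `ℂ^d`. -/
noncomputable def ip (d : ℕ) [NeZero d] (α β : ZMod d → ℂ) : ℂ :=
  ∑ j : ZMod d, (starRingEnd ℂ) (α j) * β j

/-!
Write `f_m k = conj (α (k - m)) * α k`. Up to a phase, `⟨U_{m,n} α, U_{m',n'} α⟩` is the discrete
Fourier coefficient of `f_{m-m'}` at `n - n'`, so orthogonality conditions are Fourier zeros.
Let `d = 2 h`. Since `(h, h) = -(h, h)`, zeros at `h, h - 1, …, h - (K - 1)` for `f_h` or `f_0`
reflect to `2 K - 1` consecutive zeros centred at `h`, and by a Vandermonde determinant a function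
with at least as many consecutive Fourier zeros as support points vanishes. With `K = h + 1` this
gives `f_h = 0`, whence `α` is supported on at most `h` points; then about `d / 4` zeros of
`f_0 = |α|²` suffice to force `α = 0`.

Zeros at all `h - j`, `j < t * r`, cost only `t + r` labels, by writing `j = t * i + b`: take
`(0, b)` for `b < t` and `(m, h - t * i)` for `i < r`, the former serving both `f_h` and `f_0`.
-/

open scoped ZMod

section

variable {d : ℕ} {α : ZMod d → ℂ}

/-- The lag product `k ↦ conj (α (k - m)) * α k`, whose discrete Fourier transform (the ambiguity
function of `α`) carries all inner products between the vectors `U_{m,n} α`. -/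
noncomputable def lagProduct (α : ZMod d → ℂ) (m : ZMod d) : ZMod d → ℂ :=
  fun k => (starRingEnd ℂ) (α (k - m)) * α k

lemma lagProduct_eq_zero_iff {m k : ZMod d} :
    lagProduct α m k = 0 ↔ α (k - m) = 0 ∨ α k = 0 := by
  simp [lagProduct]

/-- The labels `(m, x), (m, x + y), …, (m, x + (r - 1) y)`: an arithmetic progression of `r` powers
of `Z` attached to the shift `X ^ m`. -/
def pauliProgression (m x y : ZMod d) (r : ℕ) : Finset (ZMod d × ZMod d) :=
  (Finset.range r).image fun i : ℕ => (m, x + i * y)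

lemma mem_pauliProgression {m x y : ZMod d} {r i : ℕ} (hi : i < r) :
    (m, x + i * y) ∈ pauliProgression m x y r :=
  Finset.mem_image_of_mem _ (Finset.mem_range.2 hi)

lemma card_pauliProgression_le (m x y : ZMod d) (r : ℕ) :
    (pauliProgression m x y r).card ≤ r :=
  Finset.card_image_le.trans (Finset.card_range r).le

/-- The labels defeating every `α` when `d = 2 h`: the powers `1, Z, …, Z ^ (t - 1)` serve as
units digits, and the progressions of step `-t` attached to `X ^ h` and to `X ^ 0` as the
higher digits. -/
def indistinguishableLabels (d h s t r : ℕ) : Finset (ZMod d × ZMod d) :=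
  pauliProgression 0 0 1 t ∪ pauliProgression h h (-t) s ∪ pauliProgression 0 h (-t) r

lemma card_indistinguishableLabels_le (d h s t r : ℕ) :
    (indistinguishableLabels d h s t r).card ≤ s + t + r := by
  rw [add_comm s t]
  exact (Finset.card_union_le _ _).trans (add_le_add
    ((Finset.card_union_le _ _).trans (add_le_add (card_pauliProgression_le _ _ _ _)
      (card_pauliProgression_le _ _ _ _))) (card_pauliProgression_le _ _ _ _))

variable [NeZero d]

lemma ω_pow_val_mul_val (a b : ZMod d) : ω d ^ (a.val * b.val) = ZMod.stdAddChar (a * b) := by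
  have hab : a * b = ((a.val * b.val : ℤ) : ZMod d) := by simp
  rw [hab, ZMod.stdAddChar_coe, ω, ← Complex.exp_nat_mul]
  congr 1
  push_cast
  ring

lemma conj_ip (α β : ZMod d → ℂ) : (starRingEnd ℂ) (ip d α β) = ip d β α := by
  simp [ip, mul_comm]

lemma ip_eq_zero_comm {α β : ZMod d → ℂ} : ip d α β = 0 ↔ ip d β α = 0 := by
  rw [← conj_ip, map_eq_zero]

lemma ip_pU_pU (α : ZMod d → ℂ) (m n m' n' : ZMod d) :
    ip d (pU d m n α) (pU d m' n' α) =
      ZMod.stdAddChar (n * (m - m')) * 𝓕 (lagProduct α (m - m')) (n - n') := by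
  have hphase (k : ZMod d) : (ZMod.stdAddChar (-(n * (k + m' - m))) : ℂ) *
      ZMod.stdAddChar (n' * k) =
        ZMod.stdAddChar (n * (m - m')) * ZMod.stdAddChar (-(k * (n - n'))) := by
    rw [← AddChar.map_add_eq_mul, ← AddChar.map_add_eq_mul]
    ring_nf
  have hlag (k : ZMod d) : k - (m - m') = k + m' - m := by ring
  rw [ip, ← Equiv.sum_comp (Equiv.addRight m'), ZMod.dft_apply, Finset.mul_sum]
  refine Finset.sum_congr rfl fun k _ => ?_
  simp only [pU, lagProduct, Equiv.coe_addRight, ω_pow_val_mul_val, map_mul, smul_eq_mul,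
    ← AddChar.map_neg_eq_conj, hlag, add_sub_cancel_right]
  linear_combination (starRingEnd ℂ (α (k + m' - m)) * α k) * hphase k

lemma ip_pU_pU_eq_zero_iff {m n m' n' : ZMod d} :
    ip d (pU d m n α) (pU d m' n' α) = 0 ↔ 𝓕 (lagProduct α (m - m')) (n - n') = 0 := by
  rw [ip_pU_pU, mul_eq_zero, or_iff_right (AddChar.val_isUnit _ _).ne_zero]

lemma dft_lagProduct_neg_neg_eq_zero_iff {m x : ZMod d} :
    𝓕 (lagProduct α (-m)) (-x) = 0 ↔ 𝓕 (lagProduct α m) x = 0 := by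
  rw [← sub_zero m, ← sub_zero x, ← ip_pU_pU_eq_zero_iff, ip_eq_zero_comm, ip_pU_pU_eq_zero_iff,
    neg_sub, neg_sub]

lemma eq_zero_of_dft_consecutive_eq_zero {f : ZMod d → ℂ} {N : ℕ} (x₀ : ZMod d)
    (hN : Finset.card {k | f k ≠ 0} ≤ N) (hf : ∀ i < N, 𝓕 f (x₀ + i) = 0) : f = 0 := by
  set T : Finset (ZMod d) := {k | f k ≠ 0} with hT
  let e := T.equivFin.symm
  let node (j : Fin T.card) : ℂ := ZMod.stdAddChar (-(e j : ZMod d))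
  let weight (j : Fin T.card) : ℂ := ZMod.stdAddChar (-((e j : ZMod d) * x₀)) * f (e j)
  have hnode : Function.Injective node := fun i j hij =>
    e.injective (Subtype.ext (neg_injective (ZMod.injective_stdAddChar hij)))
  have hmoments (i : Fin T.card) : ∑ j : Fin T.card, weight j * node j ^ (i : ℕ) = 0 := by
    rw [← hf i (i.isLt.trans_le hN), ZMod.dft_apply, ← Finset.sum_subset T.subset_univ,
      ← T.sum_coe_sort, ← e.sum_comp]
    · refine Finset.sum_congr rfl fun j _ => ?_
      rw [← AddChar.map_nsmul_eq_pow, mul_right_comm, ← AddChar.map_add_eq_mul, smul_eq_mul,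
        nsmul_eq_mul]
      ring_nf
    · simp +contextual [hT]
  have hweight : weight = 0 := Matrix.eq_zero_of_forall_pow_sum_mul_pow_eq_zero hnode hmoments
  ext k
  by_contra hk
  have hkT : k ∈ T := by simpa [hT] using hk
  have hkweight : ZMod.stdAddChar (-(k * x₀)) * f k = 0 := by
    simpa [weight, e] using congrFun hweight (T.equivFin ⟨k, hkT⟩)
  exact hk ((mul_eq_zero_iff_left (AddChar.val_isUnit _ _).ne_zero).1 hkweight)

lemma lagProduct_eq_zero_of_dft_eq_zero {m c : ZMod d} (hm : -m = m) (hc : -c = c) {K : ℕ}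
    (hK : Finset.card {k | lagProduct α m k ≠ 0} < 2 * K)
    (hdft : ∀ j < K, 𝓕 (lagProduct α m) (c - j) = 0) : lagProduct α m = 0 := by
  refine eq_zero_of_dft_consecutive_eq_zero (c - (K - 1 : ℕ)) (Nat.le_sub_one_of_lt hK) ?_
  intro i hi
  rcases lt_or_ge i K with hiK | hiK
  · obtain ⟨j, rfl⟩ := Nat.exists_eq_add_of_lt hiK
    convert hdft j (by omega) using 2
    push_cast [Nat.add_sub_cancel]
    ring
  · obtain ⟨j, rfl⟩ := Nat.exists_eq_add_of_le hiK
    rw [← dft_lagProduct_neg_neg_eq_zero_iff, hm]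
    convert hdft (j + 1) (by omega) using 2
    rw [Nat.cast_pred (by omega)]
    push_cast
    linear_combination hc

lemma two_mul_card_support_le_of_lagProduct_eq_zero {m : ZMod d} (hα : lagProduct α m = 0) :
    2 * Finset.card {k | α k ≠ 0} ≤ d := by
  classical
  set T : Finset (ZMod d) := {k | α k ≠ 0} with hT
  have hshift : T.card ≤ Tᶜ.card := by
    refine Finset.card_le_card_of_injOn (· - m) (fun k hk => ?_) sub_left_injective.injOn
    have hαk : α k ≠ 0 := by simpa [hT] using hk
    simpa [hT] using (lagProduct_eq_zero_iff.1 (congrFun hα k)).resolve_right hαk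
  have hcard := T.card_add_card_compl
  rw [ZMod.card] at hcard
  omega

/-- The vectors `U_{m,n} α`, `(m, n) ∈ S`, are pairwise orthogonal. By the Nathanson–Zhang
criterion, a unit vector `α` with this property is what one-way LOCC discrimination requires. -/
def PauliOrthogonal (α : ZMod d → ℂ) (S : Finset (ZMod d × ZMod d)) : Prop :=
  ∀ p ∈ S, ∀ q ∈ S, p ≠ q → ip d (pU d p.1 p.2 α) (pU d q.1 q.2 α) = 0

lemma PauliOrthogonal.mono {S T : Finset (ZMod d × ZMod d)} (hST : S ⊆ T)
    (hT : PauliOrthogonal α T) : PauliOrthogonal α S :=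
  fun p hp q hq => hT p (hST hp) q (hST hq)

lemma PauliOrthogonal.dft_lagProduct_eq_zero {m c : ZMod d} {t r j : ℕ}
    (hα : PauliOrthogonal α (pauliProgression 0 0 1 t ∪ pauliProgression m c (-t) r))
    (hj : j < r * t) (hne : (m, c - j) ≠ 0) : 𝓕 (lagProduct α m) (c - j) = 0 := by
  have ht : 0 < t := Nat.pos_of_mul_pos_left (Nat.zero_lt_of_lt hj)
  have hunits : ((0 : ZMod d), 0 + ((j % t : ℕ) : ZMod d) * 1) ∈ pauliProgression 0 0 1 t :=
    mem_pauliProgression (Nat.mod_lt j ht)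
  have hhigher : (m, c + ((j / t : ℕ) : ZMod d) * -t) ∈ pauliProgression m c (-t) r :=
    mem_pauliProgression ((Nat.div_lt_iff_lt_mul ht).2 hj)
  have hdiff : c + ((j / t : ℕ) : ZMod d) * -t - (0 + ((j % t : ℕ) : ZMod d) * 1) = c - j := by
    conv_rhs => rw [← Nat.div_add_mod j t, Nat.cast_add, Nat.cast_mul]
    ring
  have hlabels : (m, c + ((j / t : ℕ) : ZMod d) * -t) ≠ (0, 0 + ((j % t : ℕ) : ZMod d) * 1) := by
    rwa [Ne, ← sub_eq_zero, Prod.mk_sub_mk, sub_zero, hdiff]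
  simpa only [ip_pU_pU_eq_zero_iff, sub_zero, hdiff] using
    hα _ (Finset.mem_union_right _ hhigher) _ (Finset.mem_union_left _ hunits) hlabels

lemma PauliOrthogonal.eq_zero {h s t r : ℕ} (hd : d = h + h) (hst : h < s * t)
    (hrt : h < 2 * (r * t)) (hα : PauliOrthogonal α (indistinguishableLabels d h s t r)) :
    α = 0 := by
  have hh : 0 < h := by have := NeZero.pos d; omega
  have cast_ne_zero (x : ℕ) (hx : 0 < x) (hxh : x ≤ h) : (x : ZMod d) ≠ 0 := by
    rw [Ne, ZMod.natCast_eq_zero_iff]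
    exact Nat.not_dvd_of_pos_of_lt hx (by omega)
  have hneg : -(h : ZMod d) = h := by
    rw [neg_eq_iff_add_eq_zero, ← Nat.cast_add, ← hd, ZMod.natCast_self]
  have hshift : lagProduct α h = 0 := by
    refine lagProduct_eq_zero_of_dft_eq_zero hneg hneg (K := h + 1) ?_ fun j hj => ?_
    · have := Finset.card_le_univ ({k | lagProduct α h k ≠ 0} : Finset (ZMod d))
      rw [ZMod.card] at this
      omega
    · exact (hα.mono Finset.subset_union_left).dft_lagProduct_eq_zero (by omega)
        (by simp [cast_ne_zero h hh le_rfl])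
  have hsupport := two_mul_card_support_le_of_lagProduct_eq_zero hshift
  have hnormSq : lagProduct α 0 = 0 := by
    refine lagProduct_eq_zero_of_dft_eq_zero neg_zero hneg (K := h / 2 + 1) ?_ fun j hj => ?_
    · simp only [ne_eq, lagProduct_eq_zero_iff, sub_zero, or_self] at hsupport ⊢
      omega
    · refine PauliOrthogonal.dft_lagProduct_eq_zero (t := t) (r := r) (hα.mono ?_) (by omega) ?_
      · exact Finset.union_subset_union_left Finset.subset_union_left
      · rw [← Nat.cast_sub (by omega)]
        simpa using cast_ne_zero (h - j) (by omega) (by omega)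
  ext k
  simpa [lagProduct_eq_zero_iff] using congrFun hnormSq k

lemma exists_indistinguishable_of_card_le {h s t r : ℕ} (hd : d = h + h) (hst : h < s * t)
    (hrt : h < 2 * (r * t)) (hcard : s + t + r ≤ d ^ 2) :
    ∃ S : Finset (ZMod d × ZMod d), S.card = s + t + r ∧
      ¬ ∃ α : ZMod d → ℂ, ip d α α = 1 ∧ PauliOrthogonal α S := by
  obtain ⟨S, hsub, hS⟩ := Finset.exists_superset_card_eq
    (card_indistinguishableLabels_le d h s t r) (by simpa [sq] using hcard)
  refine ⟨S, hS, fun ⟨α, hunit, hα⟩ => ?_⟩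
  have hzero : α = 0 := (hα.mono hsub).eq_zero hd hst hrt
  simp [hzero, ip] at hunit

end

lemma exists_eq_add_of_le_shifted_mul {D a b k : ℕ} (hD : 0 < D)
    (hk : (D : ℤ) ≤ ((a : ℤ) - (k : ℤ)) * ((b : ℤ) + (k : ℤ))) :
    ∃ s, a = s + k ∧ D ≤ s * (b + k) := by
  have hka : k ≤ a := by
    by_contra! hak
    have : ((a : ℤ) - k) * (b + k) ≤ 0 :=
      mul_nonpos_of_nonpos_of_nonneg (by omega) (by positivity)
    omega
  obtain ⟨s, rfl⟩ := Nat.exists_eq_add_of_le' hka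
  refine ⟨s, rfl, ?_⟩
  push_cast at hk
  rw [add_sub_cancel_right] at hk
  exact_mod_cast hk

lemma ceil_ceil_quarter_div_le {d : ℕ} (hd : 0 < d) (t : ℕ) :
    ⌈(⌈((d : ℚ) + 1) / 4⌉₊ : ℚ) / (t : ℚ)⌉₊ ≤ d := by
  have hquarter : ⌈((d : ℚ) + 1) / 4⌉₊ ≤ d := by
    have : (1 : ℚ) ≤ d := by exact_mod_cast hd
    exact Nat.ceil_le.2 (by linarith)
  refine Nat.ceil_le.2 ((div_nat_le_self_of_nonnneg (Nat.cast_nonneg _) t).trans ?_)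
  exact_mod_cast hquarter

theorem stmt_18_general (d : ℕ) [NeZero d] (heven : Even d) (s t : ℕ)
    (hst : (d + 2) / 2 ≤ s * t)
    (hcard : s + t + ⌈(⌈((d : ℚ) + 1) / 4⌉₊ : ℚ) / (t : ℚ)⌉₊ ≤ d ^ 2) :
    ∃ S : Finset (ZMod d × ZMod d),
      S.card = s + t + ⌈(⌈((d : ℚ) + 1) / 4⌉₊ : ℚ) / (t : ℚ)⌉₊ ∧
      ¬ ∃ α : ZMod d → ℂ, ip d α α = 1 ∧
        ∀ p ∈ S, ∀ q ∈ S, p ≠ q → ip d (pU d p.1 p.2 α) (pU d q.1 q.2 α) = 0 := by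
  obtain ⟨h, hd⟩ := heven
  have ht : 0 < t := Nat.pos_of_mul_pos_left (by omega : 0 < s * t)
  have hquarter : d + 1 ≤ 4 * ⌈((d : ℚ) + 1) / 4⌉₊ := by
    have := (div_le_iff₀' (by norm_num)).1 (Nat.le_ceil (((d : ℚ) + 1) / 4))
    exact_mod_cast this
  have hrt : ⌈((d : ℚ) + 1) / 4⌉₊ ≤ ⌈(⌈((d : ℚ) + 1) / 4⌉₊ : ℚ) / (t : ℚ)⌉₊ * t := by
    have := (div_le_iff₀ (Nat.cast_pos.2 ht)).1
      (Nat.le_ceil ((⌈((d : ℚ) + 1) / 4⌉₊ : ℚ) / (t : ℚ)))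
    exact_mod_cast this
  exact exists_indistinguishable_of_card_le hd (by omega) (by omega) hcard

/-- (Theorem 5 of the paper, first case.) Let `d ≥ 6` be even, `D = (d+2)/2`,
and suppose `D ≤ ⌊√D⌋⌈√D⌉`. Let `k₃` be the largest `k ≥ 0` with
`D ≤ (⌊√D⌋ - k)(⌈√D⌉ + k)`. Then there exists a 1-LOCC indistinguishable set of
`⌊√D⌋ + ⌈√D⌉ + ⌈⌈(d+1)/4⌉ / (⌈√D⌉ + k₃)⌉` generalized Bell states in `d ⊗ d`. -/
theorem stmt_18 (d : ℕ) [NeZero d] (hd : 6 ≤ d) (heven : Even d)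
    (D : ℕ) (hD : D = (d + 2) / 2)
    (hle : D ≤ ⌊Real.sqrt D⌋₊ * ⌈Real.sqrt D⌉₊)
    (k₃ : ℕ)
    (hk₃ : IsGreatest {k : ℕ |
      (D : ℤ) ≤ ((⌊Real.sqrt D⌋₊ : ℤ) - (k : ℤ)) * ((⌈Real.sqrt D⌉₊ : ℤ) + (k : ℤ))} k₃) :
    ∃ S : Finset (ZMod d × ZMod d),
      S.card = ⌊Real.sqrt D⌋₊ + ⌈Real.sqrt D⌉₊ +
          ⌈(⌈((d : ℚ) + 1) / 4⌉₊ : ℚ) / ((⌈Real.sqrt D⌉₊ : ℚ) + (k₃ : ℚ))⌉₊ ∧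
      ¬ ∃ α : ZMod d → ℂ, ip d α α = 1 ∧
        ∀ p ∈ S, ∀ q ∈ S, p ≠ q → ip d (pU d p.1 p.2 α) (pU d q.1 q.2 α) = 0 := by
  obtain ⟨s, hs, hst⟩ := exists_eq_add_of_le_shifted_mul (by omega) hk₃.1
  have hceil : ⌈√(D : ℝ)⌉₊ ≤ D :=
    Nat.ceil_le.2 (Real.sqrt_le_self_iff.2 (.inr (by exact_mod_cast (by omega : 1 ≤ D))))
  have hfloor := Nat.floor_le_ceil √(D : ℝ)
  have hr := ceil_ceil_quarter_div_le (by omega : 0 < d) (⌈√(D : ℝ)⌉₊ + k₃)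
  have hsq : d + 2 + d ≤ d ^ 2 := by nlinarith
  have hsides : s + (⌈√(D : ℝ)⌉₊ + k₃) = ⌊√(D : ℝ)⌋₊ + ⌈√(D : ℝ)⌉₊ := by omega
  simpa only [hsides, Nat.cast_add] using
    stmt_18_general d heven s (⌈√(D : ℝ)⌉₊ + k₃) (hD ▸ hst) (by omega)
end

section
/- Let d ≥ 6 be even, write D = (d+2)/2, and suppose ⌊√D⌋·⌈√D⌉ < D ≤ ⌊√D⌋·(⌈√D⌉ + 1). Let k₄ be the largest nonnegative integer k such that D ≤ (⌊√D⌋ − k)(⌈√D⌉ + 1 + k). Then there exists a set S ⊆ ℤ/dℤ × ℤ/dℤ of cardinality |S| = ⌊√D⌋ + ⌈√D⌉ + 1 + ⌈⌈(d+1)/4⌉ / (⌈√D⌉ + 1 + k₄)⌉ such that there is no unit vector α ∈ ℂ^d for which the vectors X^m Z^n α, (m,n) ∈ S, are pairwise orthogonal; that is, there exists a 1-LOCC indistinguishable set of that many generalized Bell states in d⊗d. -/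
open Complex

/-!
Work with the discrete Fourier transform `𝓕` on `ℤ/dℤ`. Up to a phase, `⟨U_{m,n} α, U_{m',n'} α⟩`
is the Fourier coefficient at `n - n'` of `k ↦ conj (α k) * α (k - (m' - m))`.

Put the operators `U_{0,n}`, `n ∈ A`, into the set, where `A - A = ℤ/dℤ`. If `α` is mapped to
orthogonal vectors, all nontrivial Fourier coefficients of `|α|²` vanish, so `|α|` is constant. Now
add the operators `U_{d/2,n}`, `n ∈ E`, and let `f k = conj (α k) * α (k - d/2)`. Since
`f (k - d/2) = conj (f k)`, the support of `𝓕 f` is symmetric. If `E - A` contains `d/2` and all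
residues below some `K > d/4`, then this support misses `d/2` and stays at cyclic distance at least
`K` from `0`. But `|f|` is constant, so the autocorrelation of `𝓕 f` vanishes at every nonzero
shift. If `n` is the least cyclic distance from `0` in the support, the autocorrelation at `2n` has
the single term `𝓕 f n * conj (𝓕 f (-n))`, because `d/4 < n < d/2`; this is a contradiction.

Euclidean division by `b` yields such sets with `|A| < a + b` as soon as `d < 2ab`, and with
`|E| ≤ t + 1` as soon as `d < 4tb`.
-/

namespace GeneralizedBell

open Finset
open scoped ComplexConjugate Pointwise ZMod

section Fourier

variable {N : ℕ} [NeZero N] {E : Type*} [AddCommGroup E] [Module ℂ E]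

lemma dft_stdAddChar_smul (f : ZMod N → E) (s c : ZMod N) :
    𝓕 (fun j ↦ (ZMod.stdAddChar (-(j * s)) : ℂ) • f j) c = 𝓕 f (c + s) := by
  simp only [ZMod.dft_apply, smul_smul, ← AddChar.map_add_eq_mul, mul_add, neg_add]

lemma dft_comp_sub_right (f : ZMod N → E) (h c : ZMod N) :
    𝓕 (fun j ↦ f (j - h)) c = (ZMod.stdAddChar (-(h * c)) : ℂ) • 𝓕 f c := by
  rw [ZMod.dft_apply, ZMod.dft_apply, smul_sum, ← Equiv.sum_comp (Equiv.addRight h)]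
  refine sum_congr rfl fun j _ ↦ ?_
  rw [Equiv.coe_addRight, add_sub_cancel_right, smul_smul, ← AddChar.map_add_eq_mul]
  ring_nf

lemma dft_conj (f : ZMod N → ℂ) (c : ZMod N) :
    𝓕 (fun j ↦ conj (f j)) c = conj (𝓕 f (-c)) := by
  simp only [ZMod.dft_apply, map_sum, smul_eq_mul, map_mul, ← AddChar.map_neg_eq_conj, mul_neg,
    neg_neg]

lemma dft_const_eq_zero (v : E) {c : ZMod N} (hc : c ≠ 0) : 𝓕 (fun _ ↦ v) c = 0 := by
  have hsum : ∑ j : ZMod N, (ZMod.stdAddChar (j * -c) : ℂ) = 0 := by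
    rw [AddChar.sum_mulShift _ (ZMod.isPrimitive_stdAddChar N), if_neg (neg_ne_zero.mpr hc),
      Nat.cast_zero]
  simp only [ZMod.dft_apply, ← sum_smul, ← mul_neg, hsum, zero_smul]

lemma smul_apply_eq_dft_zero {f : ZMod N → E} (hf : ∀ c, c ≠ 0 → 𝓕 f c = 0) (k : ZMod N) :
    (N : ℂ) • f k = 𝓕 f 0 := by
  have hinv : 𝓕 (𝓕 f) (-k) = (N : ℂ) • f k := by
    simp only [ZMod.dft_dft, neg_neg]
  rw [← hinv, ZMod.dft_apply,
    sum_eq_single_of_mem 0 (mem_univ _) fun c _ hc ↦ by rw [hf c hc, smul_zero], zero_mul,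
    neg_zero, AddChar.map_zero_eq_one, one_smul]

lemma sum_dft_mul_conj_dft (f g : ZMod N → ℂ) :
    ∑ c, 𝓕 f c * conj (𝓕 g c) = N * ∑ j, f j * conj (g j) := by
  have hinv (j : ZMod N) : ∑ c, 𝓕 f c * ZMod.stdAddChar (j * c) = N * f j := by
    have hdft := congrFun (ZMod.dft_dft f) (-j)
    rw [ZMod.dft_apply, neg_neg, smul_eq_mul] at hdft
    rw [← hdft]
    refine sum_congr rfl fun c _ ↦ ?_
    rw [smul_eq_mul, mul_neg, neg_neg, mul_comm, mul_comm j]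
  calc ∑ c, 𝓕 f c * conj (𝓕 g c)
      = ∑ c, ∑ j, 𝓕 f c * ZMod.stdAddChar (j * c) * conj (g j) := by
        refine sum_congr rfl fun c _ ↦ ?_
        rw [ZMod.dft_apply g, map_sum, mul_sum]
        simp only [smul_eq_mul, map_mul, ← AddChar.map_neg_eq_conj, neg_neg, mul_assoc]
    _ = ∑ j, N * f j * conj (g j) := by
        rw [sum_comm]
        simp only [← sum_mul, hinv]
    _ = N * ∑ j, f j * conj (g j) := by simp only [mul_sum, mul_assoc]

lemma sum_dft_add_mul_conj_dft (f g : ZMod N → ℂ) (s : ZMod N) :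
    ∑ c, 𝓕 f (c + s) * conj (𝓕 g c) = N * 𝓕 (fun j ↦ f j * conj (g j)) s := by
  simp only [← dft_stdAddChar_smul f s, sum_dft_mul_conj_dft, smul_eq_mul, ZMod.dft_apply _ s,
    mul_assoc]

end Fourier

section CyclicDistance

variable {d : ℕ}

lemma neg_natCast_half (hd : Even d) : -((d / 2 : ℕ) : ZMod d) = ((d / 2 : ℕ) : ZMod d) := by
  rw [neg_eq_iff_add_eq_zero, ← Nat.cast_add, ← two_mul, Nat.two_mul_div_two_of_even hd,
    ZMod.natCast_self]

lemma natCast_half_ne_zero (hd : 1 < d) : ((d / 2 : ℕ) : ZMod d) ≠ 0 := by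
  rw [Ne, ZMod.natCast_eq_zero_iff]
  exact Nat.not_dvd_of_pos_of_lt (Nat.div_pos hd two_pos)
    (Nat.div_lt_self (by omega) one_lt_two)

lemma eq_natCast_or_eq_neg_natCast_natAbs_valMinAbs (c : ZMod d) :
    c = (c.valMinAbs.natAbs : ZMod d) ∨ c = -(c.valMinAbs.natAbs : ZMod d) := by
  obtain h | h := c.valMinAbs.natAbs_eq
  · left
    conv_lhs => rw [← c.coe_valMinAbs, h, Int.cast_natCast]
  · right
    conv_lhs => rw [← c.coe_valMinAbs, h, Int.cast_neg, Int.cast_natCast]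

variable [NeZero d]

lemma natAbs_valMinAbs_intCast_le (z : ℤ) : (z : ZMod d).valMinAbs.natAbs ≤ z.natAbs :=
  ZMod.natAbs_min_of_le_div_two d _ z (ZMod.coe_valMinAbs _) (ZMod.natAbs_valMinAbs_le _)

lemma eq_neg_of_le_natAbs_valMinAbs {n : ℕ} (hn : 2 * n < d) (hn' : d < 4 * n) {c : ZMod d}
    (hc : n ≤ c.valMinAbs.natAbs) (hc' : n ≤ (c + ((2 * n : ℕ) : ZMod d)).valMinAbs.natAbs) :
    c = -(n : ZMod d) := by
  set z := c.valMinAbs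
  have hzc : (z : ZMod d) = c := c.coe_valMinAbs
  have hz_le : z.natAbs ≤ d / 2 := c.natAbs_valMinAbs_le
  have hle_of_cast {w : ℤ} (hw : (w : ZMod d) = c + ((2 * n : ℕ) : ZMod d)) : n ≤ w.natAbs :=
    hc'.trans (hw ▸ natAbs_valMinAbs_intCast_le w)
  have hshift : n ≤ (z + 2 * n).natAbs := hle_of_cast (by push_cast [hzc]; rfl)
  have hwrap : n ≤ (z + 2 * n - d).natAbs :=
    hle_of_cast (by push_cast [hzc, ZMod.natCast_self, sub_zero]; rfl)
  have hz_eq : z = -n := by omega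
  rw [← hzc, hz_eq, Int.cast_neg, Int.cast_natCast]

lemma eq_zero_of_gap_of_sum_shift_mul_conj_eq_zero {F : ZMod d → ℂ} {K : ℕ} (hK : d < 4 * K)
    (hneg : ∀ c, F (-c) = 0 ↔ F c = 0) (hgap : ∀ n < K, F (n : ZMod d) = 0)
    (hhalf : F ((d / 2 : ℕ) : ZMod d) = 0)
    (hcorr : ∀ s, s ≠ 0 → ∑ c, F (c + s) * conj (F c) = 0) : F = 0 := by
  by_contra hF
  obtain ⟨c₀, hc₀⟩ := Function.ne_iff.mp hF
  have hnatAbs (c : ZMod d) : F (c.valMinAbs.natAbs : ZMod d) = 0 ↔ F c = 0 := by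
    obtain h | h := eq_natCast_or_eq_neg_natCast_natAbs_valMinAbs c
    · rw [← h]
    · rw [← hneg, ← h]
  obtain ⟨c₁, hFc₁, hmin⟩ : ∃ c₁, F c₁ ≠ 0 ∧
      ∀ c, F c ≠ 0 → c₁.valMinAbs.natAbs ≤ c.valMinAbs.natAbs := by
    classical
    simpa using exists_min_image ({c | F c ≠ 0} : Finset (ZMod d)) (·.valMinAbs.natAbs)
      ⟨c₀, by simpa using hc₀⟩
  set n := c₁.valMinAbs.natAbs
  have hFn : F n ≠ 0 := fun h ↦ hFc₁ ((hnatAbs c₁).mp h)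
  have hKn : K ≤ n := not_lt.mp fun h ↦ hFn (hgap n h)
  have hnd : 2 * n < d := by
    have hn_le : n ≤ d / 2 := c₁.natAbs_valMinAbs_le
    have hn_ne : n ≠ d / 2 := fun h ↦ hFn (h ▸ hhalf)
    omega
  have hs : ((2 * n : ℕ) : ZMod d) ≠ 0 := by
    rw [Ne, ZMod.natCast_eq_zero_iff]
    exact Nat.not_dvd_of_pos_of_lt (by omega) hnd
  have hsum := hcorr _ hs
  rw [sum_eq_single_of_mem (-(n : ZMod d)) (mem_univ _)] at hsum
  · have hsh : -(n : ZMod d) + ((2 * n : ℕ) : ZMod d) = n := by push_cast; ring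
    rw [hsh, mul_eq_zero, map_eq_zero, hneg, or_self] at hsum
    exact hFn hsum
  · intro c _ hc
    by_contra hne
    rw [mul_eq_zero, map_eq_zero, not_or] at hne
    exact hc (eq_neg_of_le_natAbs_valMinAbs hnd (by omega) (hmin _ hne.2) (hmin _ hne.1))

lemma eq_zero_of_mul_conj_eq_const_of_dft_gap {f : ZMod d → ℂ} {r : ℂ} {K : ℕ} (hK : d < 4 * K)
    (hf : ∀ k, f k * conj (f k) = r) (hneg : ∀ c, 𝓕 f (-c) = 0 ↔ 𝓕 f c = 0)
    (hgap : ∀ n < K, 𝓕 f (n : ZMod d) = 0) (hhalf : 𝓕 f ((d / 2 : ℕ) : ZMod d) = 0) : f = 0 := by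
  refine (map_eq_zero_iff (𝓕 : (ZMod d → ℂ) ≃ₗ[ℂ] _) (LinearEquiv.injective _)).mp
    (eq_zero_of_gap_of_sum_shift_mul_conj_eq_zero hK hneg hgap hhalf fun s hs ↦ ?_)
  simp only [sum_dft_add_mul_conj_dft, hf, dft_const_eq_zero r hs, mul_zero]

end CyclicDistance

section DifferenceSets

variable {R : Type*} [Ring R] [DecidableEq R]

/-- The multiples `0, b, …, (t - 1) b`, viewed in `R`. -/
def comb (t b : ℕ) : Finset R := (range t).image fun i : ℕ ↦ ((b * i : ℕ) : R)

/-- The block `0, -1, …, -(b - 1)` in `R`. The negative sign makes Euclidean division by `b` write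
every `x < t * b` as a difference of an element of `comb t b` and one of `negRange b`. -/
def negRange (b : ℕ) : Finset R := (range b).image fun r : ℕ ↦ -(r : R)

lemma natCast_mem_comb_sub_negRange {t b x : ℕ} (hx : x < t * b) :
    (x : R) ∈ (comb t b - negRange b : Finset R) := by
  have hb : 0 < b := Nat.pos_of_lt_mul_left hx
  have hdiv : ((b * (x / b) : ℕ) : R) ∈ (comb t b : Finset R) :=
    mem_image_of_mem _ (mem_range.mpr (Nat.div_lt_of_lt_mul (by rwa [mul_comm])))
  have hmod : -((x % b : ℕ) : R) ∈ (negRange b : Finset R) :=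
    mem_image_of_mem _ (mem_range.mpr (Nat.mod_lt x hb))
  have hx_eq : (x : R) = ((b * (x / b) : ℕ) : R) - -((x % b : ℕ) : R) := by
    rw [sub_neg_eq_add, ← Nat.cast_add, Nat.div_add_mod]
  exact hx_eq ▸ sub_mem_sub hdiv hmod

lemma card_comb_le (t b : ℕ) : (comb t b : Finset R).card ≤ t :=
  card_image_le.trans_eq (card_range t)

lemma card_negRange_le (b : ℕ) : (negRange b : Finset R).card ≤ b :=
  card_image_le.trans_eq (card_range b)

lemma zero_mem_comb {t : ℕ} (ht : 0 < t) (b : ℕ) : (0 : R) ∈ comb t b :=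
  mem_image.mpr ⟨0, mem_range.mpr ht, by simp⟩

lemma zero_mem_negRange {b : ℕ} (hb : 0 < b) : (0 : R) ∈ negRange b :=
  mem_image.mpr ⟨0, mem_range.mpr hb, by simp⟩

lemma card_comb_union_negRange_lt {a b : ℕ} (ha : 0 < a) (hb : 0 < b) :
    (comb a b ∪ negRange b : Finset R).card < a + b := by
  have hinter : 0 < (comb a b ∩ negRange b : Finset R).card :=
    card_pos.mpr ⟨0, mem_inter.mpr ⟨zero_mem_comb ha b, zero_mem_negRange hb⟩⟩
  have hsum := card_union_add_card_inter (comb a b : Finset R) (negRange b)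
  have hcomb := card_comb_le (R := R) a b
  have hneg := card_negRange_le (R := R) b
  omega

lemma mem_sub_self_of_natCast_mem {d : ℕ} [NeZero d] {A : Finset (ZMod d)} {n : ℕ} (hn : d < 2 * n)
    (hA : ∀ x < n, (x : ZMod d) ∈ A - A) (c : ZMod d) : c ∈ A - A := by
  have habs : (c.valMinAbs.natAbs : ZMod d) ∈ A - A :=
    hA _ (c.natAbs_valMinAbs_le.trans_lt (by omega))
  obtain h | h := eq_natCast_or_eq_neg_natCast_natAbs_valMinAbs c
  · rwa [h]
  · obtain ⟨p, hp, q, hq, hpq⟩ := mem_sub.mp habs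
    rw [h, ← hpq, neg_sub]
    exact sub_mem_sub hq hp

end DifferenceSets

section BellStates

variable {d : ℕ}

/-- The function `k ↦ conj (α k) * β (k - h)`, whose Fourier coefficients are, up to phases, the
inner products `⟨U_{m,n} α, U_{m+h,n'} β⟩`. -/
noncomputable def lagProduct (α β : ZMod d → ℂ) (h : ZMod d) : ZMod d → ℂ :=
  fun k ↦ conj (α k) * β (k - h)

lemma lagProduct_mul_conj (α β : ZMod d → ℂ) (h k : ZMod d) :
    lagProduct α β h k * conj (lagProduct α β h k) =
      lagProduct α α 0 k * lagProduct β β 0 (k - h) := by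
  simp only [lagProduct, map_mul, Complex.conj_conj, sub_zero]
  ring

variable [NeZero d]

/-- By the Nathanson–Zhang criterion, perfect distinguishability by one-way LOCC of the generalized
Bell states indexed by `S`: some unit vector is sent to an orthogonal family by the operators
`U_{m,n}`, `(m, n) ∈ S`. -/
def IsOneWayDistinguishable (S : Finset (ZMod d × ZMod d)) : Prop :=
  ∃ α : ZMod d → ℂ, ip d α α = 1 ∧
    ∀ p ∈ S, ∀ q ∈ S, p ≠ q → ip d (pU d p.1 p.2 α) (pU d q.1 q.2 α) = 0

lemma IsOneWayDistinguishable.mono {S T : Finset (ZMod d × ZMod d)} (hST : S ⊆ T)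
    (hT : IsOneWayDistinguishable T) : IsOneWayDistinguishable S := by
  obtain ⟨α, hα, horth⟩ := hT
  exact ⟨α, hα, fun p hp q hq ↦ horth p (hST hp) q (hST hq)⟩

lemma ω_pow_val_mul_val (n k : ZMod d) : ω d ^ (n.val * k.val) = ZMod.stdAddChar (n * k) := by
  have hcast : n * k = (((n.val * k.val : ℕ) : ℤ) : ZMod d) := by
    rw [Int.cast_natCast, Nat.cast_mul, ZMod.natCast_zmod_val, ZMod.natCast_zmod_val]
  rw [hcast, ZMod.stdAddChar_coe, ω, ← Complex.exp_nat_mul]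
  congr 1
  push_cast
  ring

lemma ip_pU_pU (m n m' n' : ZMod d) (α β : ZMod d → ℂ) :
    ip d (pU d m n α) (pU d m' n' β) =
      ZMod.stdAddChar (n' * (m - m')) * 𝓕 (lagProduct α β (m' - m)) (n - n') := by
  rw [ip, ZMod.dft_apply, mul_sum, ← Equiv.sum_comp (Equiv.addRight m)]
  refine sum_congr rfl fun k _ ↦ ?_
  have hphase : n' * (k + m - m') + -(n * k) = n' * (m - m') + -(k * (n - n')) := by ring
  have hχ := congrArg (ZMod.stdAddChar (N := d)) hphase
  rw [AddChar.map_add_eq_mul, AddChar.map_add_eq_mul] at hχ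
  simp only [pU, lagProduct, Equiv.coe_addRight, ω_pow_val_mul_val, add_sub_cancel_right, map_mul,
    ← AddChar.map_neg_eq_conj, smul_eq_mul, ← sub_add]
  rw [sub_add_eq_add_sub]
  linear_combination (conj (α k) * β (k + m - m')) * hχ

lemma ip_pU_pU_eq_zero_iff {m n m' n' : ZMod d} {α β : ZMod d → ℂ} :
    ip d (pU d m n α) (pU d m' n' β) = 0 ↔ 𝓕 (lagProduct α β (m' - m)) (n - n') = 0 := by
  rw [ip_pU_pU, mul_eq_zero, or_iff_right (AddChar.val_isUnit _ _).ne_zero]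

lemma dft_lagProduct_neg_eq_zero_iff {α β : ZMod d → ℂ} {h c : ZMod d} :
    𝓕 (lagProduct α β h) (-c) = 0 ↔ 𝓕 (lagProduct β α (-h)) c = 0 := by
  have hconj : (fun k ↦ conj (lagProduct α β h k)) = fun k ↦ lagProduct β α (-h) (k - h) := by
    funext k
    simp only [lagProduct, map_mul, Complex.conj_conj, sub_neg_eq_add, sub_add_cancel, mul_comm]
  have hdft : conj (𝓕 (lagProduct α β h) (-c)) =
      ZMod.stdAddChar (-(h * c)) * 𝓕 (lagProduct β α (-h)) c := by
    rw [← dft_conj, hconj, dft_comp_sub_right, smul_eq_mul]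
  rw [← map_eq_zero (starRingEnd ℂ), hdft, mul_eq_zero,
    or_iff_right (AddChar.val_isUnit _ _).ne_zero]

lemma dft_lagProduct_zero_zero (α : ZMod d → ℂ) : 𝓕 (lagProduct α α 0) 0 = ip d α α := by
  simp only [ZMod.dft_apply_zero, lagProduct, sub_zero, ip]

theorem not_isOneWayDistinguishable (hd : Even d) {A E : Finset (ZMod d)} {K : ℕ} (hK : d < 4 * K)
    (hA : ∀ c, c ∈ A - A) (hE : ∀ n < K, (n : ZMod d) ∈ E - A)
    (hhalf : ((d / 2 : ℕ) : ZMod d) ∈ E - A) :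
    ¬ IsOneWayDistinguishable ({0} ×ˢ A ∪ {((d / 2 : ℕ) : ZMod d)} ×ˢ E) := by
  rintro ⟨α, hα, horth⟩
  set h : ZMod d := ((d / 2 : ℕ) : ZMod d)
  have hd_one : 1 < d := Nat.le_of_dvd (NeZero.pos d) hd.two_dvd
  have hneg_h : -h = h := neg_natCast_half hd
  have hh_ne : h ≠ 0 := natCast_half_ne_zero hd_one
  have hlag_zero (c : ZMod d) (hc : c ≠ 0) : 𝓕 (lagProduct α α 0) c = 0 := by
    obtain ⟨p, hp, q, hq, rfl⟩ := mem_sub.mp (hA c)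
    rw [← sub_self 0, ← ip_pU_pU_eq_zero_iff]
    exact horth (0, p) (by simp [hp]) (0, q) (by simp [hq]) (by simpa [sub_ne_zero] using hc)
  have hlag_half {c : ZMod d} (hc : c ∈ E - A) : 𝓕 (lagProduct α α h) c = 0 := by
    obtain ⟨p, hp, q, hq, rfl⟩ := mem_sub.mp hc
    rw [← hneg_h, ← zero_sub, ← ip_pU_pU_eq_zero_iff]
    exact horth (h, p) (by simp [hp]) (0, q) (by simp [hq]) (by simp [hh_ne])
  have hmod (k : ZMod d) : lagProduct α α 0 k = (d : ℂ)⁻¹ := by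
    refine eq_inv_of_mul_eq_one_right ?_
    rw [← smul_eq_mul, smul_apply_eq_dft_zero hlag_zero, dft_lagProduct_zero_zero, hα]
  have hmod_half (k : ZMod d) :
      lagProduct α α h k * conj (lagProduct α α h k) = (d : ℂ)⁻¹ * (d : ℂ)⁻¹ := by
    rw [lagProduct_mul_conj, hmod, hmod]
  have hzero : lagProduct α α h = 0 :=
    eq_zero_of_mul_conj_eq_const_of_dft_gap hK hmod_half
      (fun c ↦ by rw [dft_lagProduct_neg_eq_zero_iff, hneg_h])
      (fun n hn ↦ hlag_half (hE n hn)) (hlag_half hhalf)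
  simpa [hzero, NeZero.ne d] using hmod_half 0

theorem exists_card_eq_not_isOneWayDistinguishable (hd : Even d) {a b t : ℕ}
    (hab : d < 2 * (a * b)) (htb : d < 4 * (t * b)) (hcard : a + b + t ≤ d ^ 2) :
    ∃ S : Finset (ZMod d × ZMod d), S.card = a + b + t ∧ ¬ IsOneWayDistinguishable S := by
  have ha : 0 < a := Nat.pos_of_ne_zero (by rintro rfl; omega)
  have hb : 0 < b := Nat.pos_of_ne_zero (by rintro rfl; omega)
  set A : Finset (ZMod d) := comb a b ∪ negRange b
  set E : Finset (ZMod d) := insert ((d / 2 : ℕ) : ZMod d) (comb t b)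
  have hA : ∀ c, c ∈ A - A := mem_sub_self_of_natCast_mem hab fun x hx ↦
    sub_subset_sub subset_union_left subset_union_right (natCast_mem_comb_sub_negRange hx)
  have hE (n : ℕ) (hn : n < t * b) : (n : ZMod d) ∈ E - A :=
    sub_subset_sub (subset_insert _ _) subset_union_right (natCast_mem_comb_sub_negRange hn)
  have hhalf : ((d / 2 : ℕ) : ZMod d) ∈ E - A :=
    mem_sub.mpr ⟨_, mem_insert_self _ _, 0, mem_union_right _ (zero_mem_negRange hb), sub_zero _⟩
  have hT : ({0} ×ˢ A ∪ {((d / 2 : ℕ) : ZMod d)} ×ˢ E).card ≤ a + b + t := by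
    have hunion := card_union_le ({0} ×ˢ A) ({((d / 2 : ℕ) : ZMod d)} ×ˢ E)
    have hAcard : A.card < a + b := card_comb_union_negRange_lt ha hb
    have hEcard : E.card ≤ t + 1 := (card_insert_le _ _).trans (by gcongr; exact card_comb_le t b)
    simp only [card_product, card_singleton, one_mul] at hunion
    omega
  obtain ⟨S, hTS, hS⟩ := exists_superset_card_eq hT (by simpa [ZMod.card, sq] using hcard)
  exact ⟨S, hS, fun h ↦ not_isOneWayDistinguishable hd htb hA hE hhalf (h.mono hTS)⟩

end BellStates

section Rounding

lemma natFloor_sqrt_le (n : ℕ) : ⌊√(n : ℝ)⌋₊ ≤ n := by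
  rw [Real.nat_floor_real_sqrt_eq_nat_sqrt]
  exact n.sqrt_le_self

lemma natCeil_sqrt_le (n : ℕ) : ⌈√(n : ℝ)⌉₊ ≤ n := by
  rw [Nat.ceil_le, Real.sqrt_le_left n.cast_nonneg]
  exact_mod_cast Nat.le_self_pow two_ne_zero n

variable {F : Type*} [Field F] [LinearOrder F] [IsStrictOrderedRing F] [FloorSemiring F]

lemma le_natCeil_natCeil_div_mul (x : F) {b : F} (hb : 0 < b) :
    x ≤ ⌈(⌈x⌉₊ : F) / b⌉₊ * b :=
  (Nat.le_ceil x).trans ((div_le_iff₀ hb).mp (Nat.le_ceil _))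

lemma natCeil_natCeil_div_le {x b : F} {n : ℕ} (hx : x ≤ n) (hb : 1 ≤ b) :
    ⌈(⌈x⌉₊ : F) / b⌉₊ ≤ n :=
  Nat.ceil_le.mpr <|
    (div_le_self (Nat.cast_nonneg _) hb).trans (Nat.cast_le.mpr (Nat.ceil_le.mpr hx))

end Rounding

end GeneralizedBell

theorem stmt_19_general (d : ℕ) [NeZero d] (hd : 2 < d) (heven : Even d)
    (D : ℕ) (hD : D = (d + 2) / 2) (k : ℕ)
    (hk : (D : ℤ) ≤
      ((⌊Real.sqrt D⌋₊ : ℤ) - (k : ℤ)) * ((⌈Real.sqrt D⌉₊ : ℤ) + 1 + (k : ℤ))) :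
    ∃ S : Finset (ZMod d × ZMod d),
      S.card = ⌊Real.sqrt D⌋₊ + ⌈Real.sqrt D⌉₊ + 1 +
          ⌈(⌈((d : ℚ) + 1) / 4⌉₊ : ℚ) / ((⌈Real.sqrt D⌉₊ : ℚ) + 1 + (k : ℚ))⌉₊ ∧
      ¬ ∃ α : ZMod d → ℂ, ip d α α = 1 ∧
        ∀ p ∈ S, ∀ q ∈ S, p ≠ q → ip d (pU d p.1 p.2 α) (pU d q.1 q.2 α) = 0 := by
  have hrD : ⌊Real.sqrt D⌋₊ ≤ D := GeneralizedBell.natFloor_sqrt_le D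
  have hsD : ⌈Real.sqrt D⌉₊ ≤ D := GeneralizedBell.natCeil_sqrt_le D
  set r := ⌊Real.sqrt D⌋₊
  set s := ⌈Real.sqrt D⌉₊
  set t := ⌈(⌈((d : ℚ) + 1) / 4⌉₊ : ℚ) / ((s : ℚ) + 1 + (k : ℚ))⌉₊
  have hkr : k < r := by
    have hpos : (0 : ℤ) < (r - k) * (s + 1 + k) := lt_of_lt_of_le (by omega) hk
    have := pos_of_mul_pos_left hpos (by positivity)
    omega
  have hab : d < 2 * ((r - k) * (s + 1 + k)) := by
    zify [hkr.le]
    omega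
  have htb : d < 4 * (t * (s + 1 + k)) := by
    have hle : ((d : ℚ) + 1) / 4 ≤ t * ((s : ℚ) + 1 + k) :=
      GeneralizedBell.le_natCeil_natCeil_div_mul _ (by positivity)
    qify
    linarith
  have htd : t ≤ d := by
    have hd' : (2 : ℚ) < d := by exact_mod_cast hd
    exact GeneralizedBell.natCeil_natCeil_div_le (by linarith)
      (by rw [add_right_comm]; exact le_add_of_nonneg_left (by positivity))
  have hcard : r - k + (s + 1 + k) + t ≤ d ^ 2 := by
    have hsq : 3 * d ≤ d ^ 2 := sq d ▸ Nat.mul_le_mul_right d hd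
    omega
  obtain ⟨S, hS, hS_ind⟩ :=
    GeneralizedBell.exists_card_eq_not_isOneWayDistinguishable heven hab htb hcard
  exact ⟨S, by omega, hS_ind⟩

/-- (Theorem 5 of the paper, second case.) Let `d ≥ 6` be even, `D = (d+2)/2`,
and suppose `⌊√D⌋⌈√D⌉ < D ≤ ⌊√D⌋(⌈√D⌉ + 1)`. Let `k₄` be the largest `k ≥ 0`
with `D ≤ (⌊√D⌋ - k)(⌈√D⌉ + 1 + k)`. Then there exists a 1-LOCC
indistinguishable set of `⌊√D⌋ + ⌈√D⌉ + 1 + ⌈⌈(d+1)/4⌉ / (⌈√D⌉ + 1 + k₄)⌉`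
generalized Bell states in `d ⊗ d`. -/
theorem stmt_19 (d : ℕ) [NeZero d] (hd : 6 ≤ d) (heven : Even d)
    (D : ℕ) (hD : D = (d + 2) / 2)
    (hlt : ⌊Real.sqrt D⌋₊ * ⌈Real.sqrt D⌉₊ < D)
    (hle : D ≤ ⌊Real.sqrt D⌋₊ * (⌈Real.sqrt D⌉₊ + 1))
    (k₄ : ℕ)
    (hk₄ : IsGreatest {k : ℕ |
      (D : ℤ) ≤ ((⌊Real.sqrt D⌋₊ : ℤ) - (k : ℤ)) * ((⌈Real.sqrt D⌉₊ : ℤ) + 1 + (k : ℤ))} k₄) :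
    ∃ S : Finset (ZMod d × ZMod d),
      S.card = ⌊Real.sqrt D⌋₊ + ⌈Real.sqrt D⌉₊ + 1 +
          ⌈(⌈((d : ℚ) + 1) / 4⌉₊ : ℚ) / ((⌈Real.sqrt D⌉₊ : ℚ) + 1 + (k₄ : ℚ))⌉₊ ∧
      ¬ ∃ α : ZMod d → ℂ, ip d α α = 1 ∧
        ∀ p ∈ S, ∀ q ∈ S, p ≠ q → ip d (pU d p.1 p.2 α) (pU d q.1 q.2 α) = 0 := by
  exact stmt_19_general d (by omega) heven D hD k₄ hk₄.1
end
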